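/- Let H = (H(t))_{t≥0} and G = (G(t))_{t≥0} be nonnegative, right-continuous, 𝔉-adapted processes such that 𝔼(sup_{t≥0} H(t)) < ∞, G is a supermartingale with sup_{t≥0} 𝔼(G(t)) < ∞, and H(0) = h₀ and G(0) = g₀ are a.s. equal to constants. If sup over 𝔉-stopping times τ of 𝔼(H(τ)) = h₀, then sup over 𝔉-stopping times τ of 𝔼(H(τ) + G(τ)) = h₀ + g₀. (This is the content of the lemma asserting that the stopping set of a gain function h is contained in the stopping set of h + g whenever the discounted g-process is a nonnegative right-continuous supermartingale.) -/

import Mathlib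

open MeasureTheory Set Filter
open scoped ENNReal NNReal

noncomputable section

variable {Ω : Type*}

/-- `𝒢^ρ`: the smallest filtration making the `[0,∞]`-valued map `ρ` a stopping time,
`𝒢^ρ_t = σ({ρ ≤ s} : s ≤ t)`. -/
def genFilt (ρ : Ω → ℝ≥0∞) (t : ℝ≥0) : MeasurableSpace Ω :=
  MeasurableSpace.generateFrom {A | ∃ s : ℝ≥0, s ≤ t ∧ A = {ω | ρ ω ≤ (s : ℝ≥0∞)}}

/-- `𝔄^ρ`: the smallest right-continuous filtration containing `𝔄` for which `ρ` is a
stopping time, i.e. the right-continuous regularization of `t ↦ σ(𝒜_t, 𝒢^ρ_t)`. -/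
def rcEnlarge (𝔄 : ℝ≥0 → MeasurableSpace Ω) (ρ : Ω → ℝ≥0∞) (t : ℝ≥0) :
    MeasurableSpace Ω :=
  ⨅ s ∈ Set.Ioi t, (𝔄 s ⊔ genFilt ρ s)

/-- Iterated enlargement `𝔄^{ρ₀,…,ρ_{i-1}}`. -/
def enrichedFilt (𝔄 : ℝ≥0 → MeasurableSpace Ω) (ρ : ℕ → Ω → ℝ≥0∞) :
    ℕ → ℝ≥0 → MeasurableSpace Ω
  | 0 => 𝔄
  | i + 1 => rcEnlarge (enrichedFilt 𝔄 ρ i) (ρ i)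

/-- `ρ : Ω → [0,∞]` is a stopping time with respect to the filtration `𝔄 = (𝒜_t)_{t ≥ 0}`. -/
def IsStoppingTimeE (𝔄 : ℝ≥0 → MeasurableSpace Ω) (ρ : Ω → ℝ≥0∞) : Prop :=
  ∀ t : ℝ≥0, MeasurableSet[𝔄 t] {ω | ρ ω ≤ (t : ℝ≥0∞)}

/-- The σ-algebra `𝒜_ρ` of events prior to the random time `ρ`. -/
def sigmaAt (𝔄 : ℝ≥0 → MeasurableSpace Ω) (ρ : Ω → ℝ≥0∞) : MeasurableSpace Ω :=
  MeasurableSpace.generateFrom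
    {A | ∀ t : ℝ≥0, MeasurableSet[𝔄 t] (A ∩ {ω | ρ ω ≤ (t : ℝ≥0∞)})}

/-- Evaluation `Y(τ)` of a process at a `[0,∞]`-valued random time, with the convention
`Y(∞) := limsup_{t→∞} Y(t)`. -/
def evalAt (Y : ℝ≥0 → Ω → ℝ) (τ : Ω → ℝ≥0∞) (ω : Ω) : ℝ :=
  if τ ω ≠ ∞ then Y (τ ω).toNNReal ω
  else limsup (fun t : ℝ≥0 => Y t ω) atTop

/-- Right-continuity of a filtration. -/
def RightContinuousFilt (𝔄 : ℝ≥0 → MeasurableSpace Ω) : Prop :=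
  ∀ t : ℝ≥0, 𝔄 t = ⨅ s ∈ Set.Ioi t, 𝔄 s

variable {m0 : MeasurableSpace Ω}

/-- `Z` is (a version of) the essential supremum of the family of random variables `F`. -/
def IsEssSupFam (μ : Measure Ω) (F : Set (Ω → ℝ)) (Z : Ω → ℝ) : Prop :=
  (∀ f ∈ F, f ≤ᵐ[μ] Z) ∧ ∀ g : Ω → ℝ, (∀ f ∈ F, f ≤ᵐ[μ] g) → Z ≤ᵐ[μ] g

/-- The set of strategies `𝒮^n_σ(δ, 𝔄)` (0-indexed: `τ 0` is the first exercise `τ₁`,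
`δ 0` is the first waiting time `δ₁`). -/
def IsStrategy (𝔄 : ℝ≥0 → MeasurableSpace Ω) (δ : ℕ → Ω → ℝ≥0∞) (n : ℕ)
    (σ : Ω → ℝ≥0∞) (τ : ℕ → Ω → ℝ≥0∞) : Prop :=
  IsStoppingTimeE 𝔄 (τ 0) ∧ (∀ ω, σ ω ≤ τ 0 ω) ∧
    ∀ i : ℕ, i + 1 < n →
      IsStoppingTimeE (enrichedFilt 𝔄 (fun j ω => τ j ω + δ j ω) (i + 1)) (τ (i + 1)) ∧
      ∀ ω, τ i ω + δ i ω ≤ τ (i + 1) ω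

/-- `Σ_{i=1}^n Y(τ_i)`. -/
def rewardSum (Y : ℝ≥0 → Ω → ℝ) (n : ℕ) (τ : ℕ → Ω → ℝ≥0∞) (ω : Ω) : ℝ :=
  ∑ i ∈ Finset.range n, evalAt Y (τ i) ω

/-- The family of random variables whose essential supremum is `Z_n^{δ,𝔄}(σ)`. -/
def gainFam (μ : Measure Ω) (Y : ℝ≥0 → Ω → ℝ) (𝔄 : ℝ≥0 → MeasurableSpace Ω)
    (δ : ℕ → Ω → ℝ≥0∞) (n : ℕ) (σ : Ω → ℝ≥0∞) : Set (Ω → ℝ) :=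
  {g | ∃ τ : ℕ → Ω → ℝ≥0∞, IsStrategy 𝔄 δ n σ τ ∧
    g = μ[rewardSum Y n τ | sigmaAt 𝔄 σ]}

/-- The family of random variables whose essential supremum is `Z_n^{δ,𝔄}(σ)_disc`. -/
def gainFamDisc (μ : Measure Ω) (Y : ℝ≥0 → Ω → ℝ) (𝔄 : ℝ≥0 → MeasurableSpace Ω)
    (δ : ℕ → Ω → ℝ≥0∞) (n : ℕ) (σ : Ω → ℝ≥0∞) : Set (Ω → ℝ) :=
  {g | ∃ τ : ℕ → Ω → ℝ≥0∞, IsStrategy 𝔄 δ n σ τ ∧ (Set.range (τ 0)).Countable ∧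
    g = μ[rewardSum Y n τ | sigmaAt 𝔄 σ]}

/-- The hitting time `ρ_τ^B = inf{t > τ : X(t) ∈ B}` of `B` strictly after the random time `τ`. -/
def hitAfterE (X : ℝ≥0 → Ω → ℝ) (B : Set ℝ) (τ : Ω → ℝ≥0∞) (ω : Ω) : ℝ≥0∞ :=
  ⨅ u ∈ {u : ℝ≥0 | τ ω < (u : ℝ≥0∞) ∧ X u ω ∈ B}, (u : ℝ≥0∞)

/-- The set of strategies `𝒮^n_σ(B)` of the second model. -/
def IsStrategyB (𝔉 : ℝ≥0 → MeasurableSpace Ω) (X : ℝ≥0 → Ω → ℝ) (B : ℕ → Set ℝ)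
    (n : ℕ) (σ : Ω → ℝ≥0∞) (τ : ℕ → Ω → ℝ≥0∞) : Prop :=
  (∀ i < n, IsStoppingTimeE 𝔉 (τ i)) ∧ (∀ ω, σ ω ≤ τ 0 ω) ∧
    ∀ i : ℕ, i + 1 < n → ∀ ω, hitAfterE X (B i) (τ i) ω ≤ τ (i + 1) ω

/-- The family of random variables whose essential supremum is `Z_n^B(σ)` (second model). -/
def gainFamB (μ : Measure Ω) (Y : ℝ≥0 → Ω → ℝ) (𝔉 : ℝ≥0 → MeasurableSpace Ω)
    (X : ℝ≥0 → Ω → ℝ) (B : ℕ → Set ℝ) (n : ℕ) (σ : Ω → ℝ≥0∞) : Set (Ω → ℝ) :=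
  {g | ∃ τ : ℕ → Ω → ℝ≥0∞, IsStrategyB 𝔉 X B n σ τ ∧
    g = μ[rewardSum Y n τ | sigmaAt 𝔉 σ]}

open scoped Topology

/-!
It suffices to show `𝔼 G(τ) ≤ 𝔼 G(0)` for every stopping time `τ`: together with `𝔼 H(τ) ≤ h₀` this
bounds `𝔼 (H(τ) + G(τ))` by `h₀ + g₀`, the value at `τ = 0`. Rounding `τ ∧ m` up to the dyadic grid
of mesh `2⁻ᵐ` reduces the inequality to optional stopping in discrete time, and Fatou's lemma passes
to the limit `m → ∞`. On `{τ = ∞}` this needs `G(t)` to converge as `t → ∞` along all real times.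
If a right-continuous path oscillates across an interval `(a, b)` infinitely often, then for every
`k` all sufficiently fine dyadic grids see at least `k` upcrossings; since Doob's bound on the
expected number of upcrossings does not depend on the mesh, Fatou's lemma over the meshes excludes
such paths almost surely.
-/

/-- Right-continuity of a path, in the pointwise form used for the processes of the theorem. -/
def RightContinuous (f : ℝ≥0 → ℝ) : Prop :=
  ∀ t, ContinuousWithinAt f (Ici t) t

/-- The `p`-th point of the dyadic grid of mesh `2⁻ᵐ`. -/
def dyadic (m p : ℕ) : ℝ≥0 := p / 2 ^ m

lemma dyadic_zero_right (m : ℕ) : dyadic m 0 = 0 := by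
  simp only [dyadic, Nat.cast_zero, zero_div]

lemma dyadic_mul_two_pow (m n : ℕ) : dyadic m (n * 2 ^ m) = n := by
  rw [dyadic, Nat.cast_mul, Nat.cast_pow, Nat.cast_ofNat, mul_div_cancel_right₀ _ (by positivity)]

lemma dyadic_strictMono (m : ℕ) : StrictMono (dyadic m) := fun p q h ↦ by
  unfold dyadic
  gcongr

lemma dyadic_succ_le (m p : ℕ) : dyadic m (p + 1) ≤ dyadic m p + 1 := by
  rw [dyadic, dyadic, Nat.cast_add_one, add_div]
  gcongr
  exact div_le_one_of_le₀ (one_le_pow₀ one_le_two) (by positivity)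

lemma exists_dyadic_eq_of_le {k m : ℕ} (h : k ≤ m) (p : ℕ) : ∃ q, dyadic m q = dyadic k p := by
  obtain ⟨d, rfl⟩ := Nat.exists_eq_add_of_le h
  refine ⟨p * 2 ^ d, ?_⟩
  rw [dyadic, dyadic, Nat.cast_mul, Nat.cast_pow, Nat.cast_ofNat, pow_add,
    mul_div_mul_right _ _ (by positivity)]

/-- The index of the first point of the dyadic grid of mesh `2⁻ᵐ` that is at least `t`. -/
def dyadicIndex (m : ℕ) (t : ℝ≥0) : ℕ := ⌈t * 2 ^ m⌉₊

/-- The first point of the dyadic grid of mesh `2⁻ᵐ` that is at least `t`. -/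
def dyadicCeil (m : ℕ) (t : ℝ≥0) : ℝ≥0 := dyadic m (dyadicIndex m t)

lemma dyadicIndex_le_iff {m p : ℕ} {t : ℝ≥0} : dyadicIndex m t ≤ p ↔ t ≤ dyadic m p := by
  rw [dyadicIndex, dyadic, Nat.ceil_le, le_div_iff₀ (by positivity)]

lemma measurable_dyadicIndex (m : ℕ) : Measurable (dyadicIndex m) :=
  Nat.measurable_ceil.comp (measurable_id.mul_const _)

lemma le_dyadicCeil (m : ℕ) (t : ℝ≥0) : t ≤ dyadicCeil m t :=
  dyadicIndex_le_iff.1 le_rfl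

lemma dyadicCeil_natCast (m n : ℕ) : dyadicCeil m n = n := by
  have h : (n : ℝ≥0) * 2 ^ m = ((n * 2 ^ m : ℕ) : ℝ≥0) := by push_cast; rfl
  rw [dyadicCeil, dyadicIndex, h, Nat.ceil_natCast, dyadic_mul_two_pow]

lemma dyadicCeil_le_add (m : ℕ) (t : ℝ≥0) : dyadicCeil m t ≤ t + (1 / 2) ^ m := by
  rw [dyadicCeil, dyadic, dyadicIndex, div_le_iff₀ (by positivity), add_mul, ← mul_pow,
    one_div_mul_cancel two_ne_zero, one_pow]
  exact (Nat.ceil_lt_add_one (by positivity)).le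

lemma tendsto_dyadicCeil (t : ℝ≥0) : Tendsto (fun m ↦ dyadicCeil m t) atTop (𝓝[≥] t) := by
  have hmesh : Tendsto (fun m : ℕ ↦ t + (1 / 2 : ℝ≥0) ^ m) atTop (𝓝 t) := by
    simpa using (tendsto_pow_atTop_nhds_zero_of_lt_one (r := (1 / 2 : ℝ≥0)) (by positivity)
      (by norm_num)).const_add t
  exact tendsto_nhdsWithin_iff.2 ⟨tendsto_of_tendsto_of_tendsto_of_le_of_le tendsto_const_nhds hmesh
    (le_dyadicCeil · t) (dyadicCeil_le_add · t), .of_forall (le_dyadicCeil · t)⟩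

lemma RightContinuous.tendsto_dyadicCeil {f : ℝ≥0 → ℝ} (hf : RightContinuous f) (t : ℝ≥0) :
    Tendsto (fun m ↦ f (dyadicCeil m t)) atTop (𝓝 (f t)) :=
  (hf t).tendsto.comp (_root_.tendsto_dyadicCeil t)

lemma RightContinuous.exists_dyadic_mem {f : ℝ≥0 → ℝ} (hf : RightContinuous f) {U : Set ℝ}
    (hU : IsOpen U) (h : ∃ᶠ t in atTop, f t ∈ U) (T : ℝ≥0) :
    ∃ m p, T ≤ dyadic m p ∧ f (dyadic m p) ∈ U := by
  obtain ⟨t, hTt, htU⟩ := frequently_atTop.1 h T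
  obtain ⟨m, hm⟩ := ((hf.tendsto_dyadicCeil t).eventually (hU.mem_nhds htU)).exists
  exact ⟨m, dyadicIndex m t, hTt.trans (le_dyadicCeil m t), hm⟩

lemma RightContinuous.eventually_le_iff_dyadic {f : ℝ≥0 → ℝ} (hf : RightContinuous f) (c : ℝ) :
    (∀ᶠ t in atTop, f t ≤ c) ↔
      ∀ᶠ x : ℕ × ℕ in comap (fun x ↦ dyadic x.1 x.2) atTop, f (dyadic x.1 x.2) ≤ c := by
  refine ⟨fun h ↦ h.comap _, fun h ↦ ?_⟩
  obtain ⟨T, hT⟩ := eventually_atTop.1 (eventually_comap.1 h)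
  filter_upwards [eventually_ge_atTop T] with t ht
  exact le_of_tendsto' (hf.tendsto_dyadicCeil t) fun m ↦
    hT _ (ht.trans (le_dyadicCeil m t)) (m, dyadicIndex m t) rfl

lemma RightContinuous.limsup_atTop_eq_limsup_dyadic {f : ℝ≥0 → ℝ} (hf : RightContinuous f) :
    limsup f atTop = limsup (fun x : ℕ × ℕ ↦ f (dyadic x.1 x.2))
      (comap (fun x ↦ dyadic x.1 x.2) atTop) := by
  simp only [limsup_eq, hf.eventually_le_iff_dyadic]

lemma measurable_eval_of_countable {ι β : Type*} [Countable ι] [MeasurableSpace ι]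
    [MeasurableSingletonClass ι] [MeasurableSpace β] {f : ι → Ω → β} (hf : ∀ i, Measurable (f i))
    {π : Ω → ι} (hπ : Measurable π) : Measurable fun ω ↦ f (π ω) ω :=
  (measurable_from_prod_countable_right (f := Function.uncurry f) hf).comp (hπ.prodMk measurable_id)

section Measurability

variable {Y : ℝ≥0 → Ω → ℝ}

lemma measurable_eval_of_rightContinuous (hY : ∀ t, Measurable (Y t))
    (hrc : ∀ ω, RightContinuous fun t ↦ Y t ω) {σ : Ω → ℝ≥0} (hσ : Measurable σ) :
    Measurable fun ω ↦ Y (σ ω) ω := by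
  have hdyadic (m : ℕ) : Measurable fun ω ↦ Y (dyadicCeil m (σ ω)) ω :=
    measurable_eval_of_countable (f := fun p ↦ Y (dyadic m p)) (fun p ↦ hY (dyadic m p))
      ((measurable_dyadicIndex m).comp hσ)
  exact measurable_of_tendsto_metrizable hdyadic
    (tendsto_pi_nhds.2 fun ω ↦ (hrc ω).tendsto_dyadicCeil (σ ω))

lemma measurable_limsup_atTop_of_rightContinuous (hY : ∀ t, Measurable (Y t))
    (hrc : ∀ ω, RightContinuous fun t ↦ Y t ω) :
    Measurable fun ω ↦ limsup (fun t ↦ Y t ω) atTop := by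
  simp only [(hrc _).limsup_atTop_eq_limsup_dyadic]
  obtain ⟨s, hs⟩ := (comap (fun x : ℕ × ℕ ↦ dyadic x.1 x.2) atTop).exists_antitone_basis
  exact Measurable.limsup' (fun x ↦ hY (dyadic x.1 x.2)) ⟨hs.1, to_countable _⟩
    fun _ ↦ to_countable _

lemma measurable_evalAt (hY : ∀ t, Measurable (Y t))
    (hrc : ∀ ω, RightContinuous fun t ↦ Y t ω) {τ : Ω → ℝ≥0∞} (hτ : Measurable τ) :
    Measurable (evalAt Y τ) :=
  Measurable.ite (hτ (measurableSet_singleton ∞).compl)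
    (measurable_eval_of_rightContinuous hY hrc hτ.ennreal_toNNReal)
    (measurable_limsup_atTop_of_rightContinuous hY hrc)

lemma evalAt_zero (Y : ℝ≥0 → Ω → ℝ) : evalAt Y (fun _ ↦ 0) = Y 0 := by
  ext ω
  simp only [evalAt, ne_eq, ENNReal.zero_ne_top, not_false_eq_true, if_true, ENNReal.toNNReal_zero]

lemma evalAt_nonneg (hY : ∀ t ω, 0 ≤ Y t ω) (τ : Ω → ℝ≥0∞) (ω : Ω) : 0 ≤ evalAt Y τ ω := by
  unfold evalAt
  split_ifs
  · exact hY _ ω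
  · refine Real.sInf_nonneg fun c hc ↦ ?_
    obtain ⟨t, ht⟩ := (eventually_map.1 hc).exists
    exact (hY t ω).trans ht

lemma ofReal_evalAt_le_iSup (hY : ∀ t ω, 0 ≤ Y t ω) (τ : Ω → ℝ≥0∞) (ω : Ω) :
    ENNReal.ofReal (evalAt Y τ ω) ≤ ⨆ t, ENNReal.ofReal (Y t ω) := by
  rcases eq_or_ne (⨆ t, ENNReal.ofReal (Y t ω)) ∞ with htop | htop
  · exact htop ▸ le_top
  have hle (t : ℝ≥0) : Y t ω ≤ (⨆ t, ENNReal.ofReal (Y t ω)).toReal :=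
    (ENNReal.ofReal_le_iff_le_toReal htop).1 (le_iSup (fun t ↦ ENNReal.ofReal (Y t ω)) t)
  rw [ENNReal.ofReal_le_iff_le_toReal htop, evalAt]
  split_ifs
  · exact hle _
  · exact limsup_le_of_le (isCoboundedUnder_le_of_le atTop (hY · ω)) (.of_forall hle)

lemma integrable_evalAt_of_lintegral_iSup_lt_top {μ : Measure Ω} (hY : ∀ t, Measurable (Y t))
    (hpos : ∀ t ω, 0 ≤ Y t ω) (hrc : ∀ ω, RightContinuous fun t ↦ Y t ω)
    (hsup : ∫⁻ ω, ⨆ t, ENNReal.ofReal (Y t ω) ∂μ < ∞) {τ : Ω → ℝ≥0∞} (hτ : Measurable τ) :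
    Integrable (evalAt Y τ) μ :=
  (lintegral_ofReal_ne_top_iff_integrable (measurable_evalAt hY hrc hτ).aestronglyMeasurable
    (ae_of_all μ (evalAt_nonneg hpos τ))).1
    ((lintegral_mono (ofReal_evalAt_le_iSup hpos τ)).trans_lt hsup).ne

end Measurability

lemma tendsto_of_tendsto_comp_of_no_upcrossings {ι κ : Type*} {l : Filter ι} {l' : Filter κ}
    [l'.NeBot] {f : ι → ℝ} {u : κ → ι} {x : ℝ} (hu : Tendsto u l' l)
    (hx : Tendsto (f ∘ u) l' (𝓝 x))
    (hf : ∀ a b : ℚ, a < b → ¬((∃ᶠ t in l, f t < a) ∧ ∃ᶠ t in l, b < f t)) :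
    Tendsto f l (𝓝 x) := by
  refine tendsto_order.2 ⟨fun c hc ↦ ?_, fun c hc ↦ ?_⟩
  · obtain ⟨b, hcb, hbx⟩ := exists_rat_btwn hc
    obtain ⟨a, hca, hab⟩ := exists_rat_btwn hcb
    have hfreq : ∃ᶠ t in l, b < f t := hu.frequently (hx.eventually_const_lt hbx).frequently
    have hev := not_frequently.1 fun h ↦ hf a b (mod_cast hab) ⟨h, hfreq⟩
    exact hev.mono fun t ht ↦ hca.trans_le (not_lt.1 ht)
  · obtain ⟨a, hxa, hac⟩ := exists_rat_btwn hc
    obtain ⟨b, hab, hbc⟩ := exists_rat_btwn hac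
    have hfreq : ∃ᶠ t in l, f t < a := hu.frequently (hx.eventually_lt_const hxa).frequently
    have hev := not_frequently.1 fun h ↦ hf a b (mod_cast hab) ⟨hfreq, h⟩
    exact hev.mono fun t ht ↦ (not_lt.1 ht).trans_lt hbc

lemma RightContinuous.eventually_le_upcrossings_dyadic {X : ℝ≥0 → Ω → ℝ} {ω : Ω} {a b : ℝ}
    (hX : RightContinuous fun t ↦ X t ω) (hab : a < b) (ha : ∃ᶠ t in atTop, X t ω < a)
    (hb : ∃ᶠ t in atTop, b < X t ω) (k : ℕ) :
    ∀ᶠ m in atTop, k ≤ upcrossings a b (fun n ↦ X (dyadic m n)) ω := by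
  suffices h : ∃ T, ∀ᶠ m in atTop, ∃ N, dyadic m N ≤ T ∧
      k ≤ upcrossingsBefore a b (fun n ↦ X (dyadic m n)) N ω by
    obtain ⟨T, hT⟩ := h
    filter_upwards [hT] with m ⟨N, _, hN⟩
    exact le_iSup_of_le N (mod_cast hN)
  induction k with
  | zero => exact ⟨0, .of_forall fun m ↦ ⟨0, (dyadic_zero_right m).le, Nat.zero_le _⟩⟩
  | succ k ih =>
    obtain ⟨T, hT⟩ := ih
    obtain ⟨m₁, p₁, hTs, hs⟩ := hX.exists_dyadic_mem isOpen_Iio ha T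
    obtain ⟨m₂, p₂, hst, ht⟩ := hX.exists_dyadic_mem isOpen_Ioi hb (dyadic m₁ p₁)
    refine ⟨dyadic m₂ p₂ + 1, ?_⟩
    filter_upwards [hT, eventually_ge_atTop m₁, eventually_ge_atTop m₂] with m ⟨N, hNT, hk⟩ hm₁ hm₂
    obtain ⟨n₁, hn₁⟩ := exists_dyadic_eq_of_le hm₁ p₁
    obtain ⟨n₂, hn₂⟩ := exists_dyadic_eq_of_le hm₂ p₂
    rw [← hn₁] at hTs hst hs
    rw [← hn₂] at hst ht ⊢
    have hlt := upcrossingsBefore_lt_of_exists_upcrossing (f := fun n ↦ X (dyadic m n)) hab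
      ((dyadic_strictMono m).le_iff_le.1 (hNT.trans hTs)) hs
      ((dyadic_strictMono m).le_iff_le.1 hst) ht
    exact ⟨n₂ + 1, dyadic_succ_le m n₂, hk.trans_lt hlt⟩

/-- The filtration observed only at the times `u n`. -/
def sampledFiltration {ι κ : Type*} [Preorder ι] [Preorder κ] (ℱ : Filtration ι m0) {u : κ → ι}
    (hu : Monotone u) : Filtration κ m0 :=
  ⟨fun n ↦ ℱ (u n), fun _ _ h ↦ ℱ.mono (hu h), fun n ↦ ℱ.le (u n)⟩

lemma submartingale_sampled {ι κ : Type*} [Preorder ι] [Preorder κ] {μ : Measure Ω}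
    {ℱ : Filtration ι m0} {X : ι → Ω → ℝ} (hX : Submartingale X ℱ μ) {u : κ → ι}
    (hu : Monotone u) : Submartingale (fun n ↦ X (u n)) (sampledFiltration ℱ hu) μ :=
  ⟨fun n ↦ hX.1 (u n), fun _ _ h ↦ hX.2.1 _ _ (hu h), fun n ↦ hX.2.2 (u n)⟩

lemma lintegral_ofReal_posPart_sub_le {μ : Measure Ω} (f : Ω → ℝ) (a : ℝ) :
    ∫⁻ ω, ENNReal.ofReal ((f ω - a)⁺) ∂μ ≤ eLpNorm f 1 μ + ‖a‖ₑ * μ univ := by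
  rw [eLpNorm_one_eq_lintegral_enorm, ← lintegral_const, ← lintegral_add_right _ measurable_const]
  refine lintegral_mono fun ω ↦ ?_
  calc ENNReal.ofReal ((f ω - a)⁺) ≤ ENNReal.ofReal ‖f ω - a‖ :=
        ENNReal.ofReal_le_ofReal (sup_le (le_abs_self _) (abs_nonneg _))
    _ = ‖f ω - a‖ₑ := ofReal_norm _
    _ ≤ ‖f ω‖ₑ + ‖a‖ₑ := enorm_sub_le

section Submartingale

variable {μ : Measure Ω} [IsFiniteMeasure μ] {ℱ : Filtration ℝ≥0 m0} {X : ℝ≥0 → Ω → ℝ} {R : ℝ≥0}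

lemma lintegral_upcrossings_dyadic_le (hX : Submartingale X ℱ μ)
    (hR : ∀ t, eLpNorm (X t) 1 μ ≤ R) {a b : ℝ} (hab : a < b) (m : ℕ) :
    ∫⁻ ω, upcrossings a b (fun n ↦ X (dyadic m n)) ω ∂μ ≤
      (R + ‖a‖ₑ * μ univ) / ENNReal.ofReal (b - a) := by
  have hba : ENNReal.ofReal (b - a) ≠ 0 := (ENNReal.ofReal_pos.2 (sub_pos.2 hab)).ne'
  rw [ENNReal.le_div_iff_mul_le (.inl hba) (.inl ENNReal.ofReal_ne_top), mul_comm]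
  refine ((submartingale_sampled hX
    (dyadic_strictMono m).monotone).mul_lintegral_upcrossings_le_lintegral_pos_part a b).trans ?_
  exact iSup_le fun n ↦ (lintegral_ofReal_posPart_sub_le _ a).trans (by gcongr; exact hR _)

lemma ae_no_upcrossings_of_submartingale (hX : Submartingale X ℱ μ)
    (hR : ∀ t, eLpNorm (X t) 1 μ ≤ R) (hrc : ∀ ω, RightContinuous fun t ↦ X t ω)
    {a b : ℝ} (hab : a < b) :
    ∀ᵐ ω ∂μ, ¬((∃ᶠ t in atTop, X t ω < a) ∧ ∃ᶠ t in atTop, b < X t ω) := by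
  set U : ℕ → Ω → ℝ≥0∞ := fun m ↦ upcrossings a b fun n ↦ X (dyadic m n)
  have hU (m : ℕ) : Measurable (U m) := (submartingale_sampled hX
    (dyadic_strictMono m).monotone).stronglyAdapted.measurable_upcrossings hab
  have hbound : ∫⁻ ω, liminf (U · ω) atTop ∂μ ≤
      (R + ‖a‖ₑ * μ univ) / ENNReal.ofReal (b - a) :=
    (lintegral_liminf_le hU).trans <| liminf_le_of_le (by isBoundedDefault) fun c hc ↦
      let ⟨m, hm⟩ := hc.exists
      hm.trans (lintegral_upcrossings_dyadic_le hX hR hab m)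
  have hfinite : (R + ‖a‖ₑ * μ univ) / ENNReal.ofReal (b - a) ≠ ∞ :=
    ENNReal.div_ne_top (by finiteness) (ENNReal.ofReal_pos.2 (sub_pos.2 hab)).ne'
  filter_upwards [ae_lt_top (.liminf hU) (ne_top_of_le_ne_top hfinite hbound)] with ω hω ⟨ha, hb⟩
  refine hω.ne (ENNReal.eq_top_of_forall_nnreal_le fun r ↦ ?_)
  obtain ⟨k, hk⟩ := exists_nat_ge r
  exact (show (r : ℝ≥0∞) ≤ k from mod_cast hk).trans <| le_liminf_of_le (by isBoundedDefault)
    ((hrc ω).eventually_le_upcrossings_dyadic hab ha hb k)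

theorem ae_exists_tendsto_of_submartingale (hX : Submartingale X ℱ μ)
    (hR : ∀ t, eLpNorm (X t) 1 μ ≤ R) (hrc : ∀ ω, RightContinuous fun t ↦ X t ω) :
    ∀ᵐ ω ∂μ, ∃ x, Tendsto (fun t ↦ X t ω) atTop (𝓝 x) := by
  have hnat := (submartingale_sampled hX Nat.mono_cast).exists_ae_tendsto_of_bdd fun n ↦ hR n
  have hcross : ∀ᵐ ω ∂μ, ∀ a b : ℚ, a < b →
      ¬((∃ᶠ t in atTop, X t ω < a) ∧ ∃ᶠ t in atTop, b < X t ω) := by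
    simp only [ae_all_iff]
    exact fun a b hab ↦ ae_no_upcrossings_of_submartingale hX hR hrc (Rat.cast_lt.2 hab)
  filter_upwards [hnat, hcross] with ω ⟨x, hx⟩ hω
  exact ⟨x, tendsto_of_tendsto_comp_of_no_upcrossings tendsto_natCast_atTop_atTop hx hω⟩

end Submartingale

lemma integrable_and_integral_le_of_tendsto_ae {μ : Measure Ω} {f : ℕ → Ω → ℝ} {g : Ω → ℝ} {c : ℝ}
    (hf : ∀ n, Integrable (f n) μ) (hpos : ∀ n ω, 0 ≤ f n ω) (hc : ∀ n, ∫ ω, f n ω ∂μ ≤ c)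
    (hlim : ∀ᵐ ω ∂μ, Tendsto (fun n ↦ f n ω) atTop (𝓝 (g ω))) :
    Integrable g μ ∧ ∫ ω, g ω ∂μ ≤ c := by
  have hgm : AEStronglyMeasurable g μ :=
    aestronglyMeasurable_of_tendsto_ae atTop (fun n ↦ (hf n).1) hlim
  have hgpos : 0 ≤ᵐ[μ] g := hlim.mono fun ω h ↦ ge_of_tendsto' h (hpos · ω)
  have hfatou : ∫⁻ ω, ENNReal.ofReal (g ω) ∂μ ≤ ENNReal.ofReal c :=
    calc ∫⁻ ω, ENNReal.ofReal (g ω) ∂μ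
        = ∫⁻ ω, liminf (fun n ↦ ENNReal.ofReal (f n ω)) atTop ∂μ :=
          lintegral_congr_ae (hlim.mono fun ω h ↦ (ENNReal.tendsto_ofReal h).liminf_eq.symm)
      _ ≤ liminf (fun n ↦ ∫⁻ ω, ENNReal.ofReal (f n ω) ∂μ) atTop :=
          lintegral_liminf_le' fun n ↦ (hf n).1.aemeasurable.ennreal_ofReal
      _ ≤ ENNReal.ofReal c := liminf_le_of_le (by isBoundedDefault) fun b hb ↦ by
          obtain ⟨n, hn⟩ := hb.exists
          rw [← ofReal_integral_eq_lintegral_ofReal (hf n) (ae_of_all μ (hpos n))] at hn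
          exact hn.trans (ENNReal.ofReal_le_ofReal (hc n))
  have hc0 : 0 ≤ c := (integral_nonneg (hpos 0)).trans (hc 0)
  refine ⟨(lintegral_ofReal_ne_top_iff_integrable hgm hgpos).1
    (ne_top_of_le_ne_top ENNReal.ofReal_ne_top hfatou), ?_⟩
  rw [integral_eq_lintegral_of_nonneg_ae hgpos hgm]
  exact ENNReal.toReal_le_of_le_ofReal hc0 hfatou

/-- The time `t ∧ m`, which is finite even for `t = ∞`. -/
def truncTime (m : ℕ) (t : ℝ≥0∞) : ℝ≥0 := (min t m).toNNReal

lemma coe_truncTime (m : ℕ) (t : ℝ≥0∞) : (truncTime m t : ℝ≥0∞) = min t m :=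
  ENNReal.coe_toNNReal (ne_top_of_le_ne_top (ENNReal.natCast_ne_top m) (min_le_right _ _))

lemma truncTime_le (m : ℕ) (t : ℝ≥0∞) : truncTime m t ≤ m := by
  exact_mod_cast (coe_truncTime m t).trans_le (min_le_right _ _)

lemma truncTime_top (m : ℕ) : truncTime m ∞ = m := by
  rw [truncTime, top_inf_eq, ENNReal.toNNReal_natCast]

lemma eventually_truncTime_eq {t : ℝ≥0∞} (ht : t ≠ ∞) :
    ∀ᶠ m in atTop, truncTime m t = t.toNNReal := by
  obtain ⟨n, hn⟩ := ENNReal.exists_nat_gt ht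
  filter_upwards [eventually_ge_atTop n] with m hm
  rw [truncTime, min_eq_left (hn.le.trans (mod_cast hm))]

lemma tendsto_eval_dyadicCeil_truncTime {Y : ℝ≥0 → Ω → ℝ} {ω : Ω} {x : ℝ}
    (hrc : RightContinuous fun t ↦ Y t ω) (hx : Tendsto (fun t ↦ Y t ω) atTop (𝓝 x))
    (τ : Ω → ℝ≥0∞) :
    Tendsto (fun m ↦ Y (dyadicCeil m (truncTime m (τ ω))) ω) atTop (𝓝 (evalAt Y τ ω)) := by
  rcases eq_or_ne (τ ω) ∞ with hτ | hτ
  · have hlim : evalAt Y τ ω = x := by rw [evalAt, if_neg (not_not.2 hτ), hx.limsup_eq]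
    simp only [hτ, truncTime_top, dyadicCeil_natCast, hlim]
    exact hx.comp tendsto_natCast_atTop_atTop
  · rw [evalAt, if_pos hτ]
    refine (hrc.tendsto_dyadicCeil _).congr' ?_
    filter_upwards [eventually_truncTime_eq hτ] with m hm
    rw [hm]

section StoppingTime

variable {ℱ : Filtration ℝ≥0 m0} {τ : Ω → ℝ≥0∞}

lemma isStoppingTimeE_zero (𝔄 : ℝ≥0 → MeasurableSpace Ω) : IsStoppingTimeE 𝔄 fun _ ↦ 0 :=
  fun _ ↦ by simp only [zero_le, ofPred_true, MeasurableSet.univ]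

lemma IsStoppingTimeE.measurable (hτ : IsStoppingTimeE ℱ τ) : Measurable τ :=
  measurable_of_Iic fun c ↦ by
    rcases eq_or_ne c ∞ with rfl | hc
    · simp only [Iic_top, preimage_univ, MeasurableSet.univ]
    · lift c to ℝ≥0 using hc
      exact ℱ.le c _ (hτ c)

lemma IsStoppingTimeE.truncTime (hτ : IsStoppingTimeE ℱ τ) (m : ℕ) :
    IsStoppingTimeE ℱ fun ω ↦ truncTime m (τ ω) := fun t ↦ by
  simp only [coe_truncTime, min_le_iff, ofPred_or]
  exact (hτ t).union (MeasurableSet.const _)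

lemma IsStoppingTimeE.isStoppingTime_dyadicIndex {σ : Ω → ℝ≥0}
    (hσ : IsStoppingTimeE ℱ fun ω ↦ σ ω) (m : ℕ) :
    IsStoppingTime (sampledFiltration ℱ (dyadic_strictMono m).monotone)
      fun ω ↦ (dyadicIndex m (σ ω) : WithTop ℕ) := fun p ↦ by
  change MeasurableSet[ℱ (dyadic m p)] _
  simpa only [WithTop.coe_le_coe, dyadicIndex_le_iff, ENNReal.coe_le_coe, Nat.cast_withTop]
    using hσ (dyadic m p)

end StoppingTime

section Supermartingale

variable {μ : Measure Ω} [IsFiniteMeasure μ] {ℱ : Filtration ℝ≥0 m0} {G : ℝ≥0 → Ω → ℝ}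

lemma integrable_and_integral_stopped_le {𝒢 : Filtration ℕ m0} {f : ℕ → Ω → ℝ}
    (hf : Supermartingale f 𝒢 μ) {π : Ω → ℕ} (hπ : IsStoppingTime 𝒢 fun ω ↦ (π ω : WithTop ℕ))
    {N : ℕ} (hN : ∀ ω, π ω ≤ N) :
    Integrable (fun ω ↦ f (π ω) ω) μ ∧ ∫ ω, f (π ω) ω ∂μ ≤ ∫ ω, f 0 ω ∂μ := by
  have hbdd (ω : Ω) : (π ω : WithTop ℕ) ≤ N := mod_cast hN ω
  have hint : Integrable (fun ω ↦ -f (π ω) ω) μ := hf.neg.integrable_stoppedValue hπ hbdd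
  have hle : ∫ ω, -f 0 ω ∂μ ≤ ∫ ω, -f (π ω) ω ∂μ :=
    hf.neg.expected_stoppedValue_mono (isStoppingTime_const _ 0) hπ (fun _ ↦ zero_le) hbdd
  rw [integral_neg, integral_neg, neg_le_neg_iff] at hle
  exact ⟨integrable_neg_iff.1 hint, hle⟩

lemma integrable_and_integral_eval_dyadicCeil_le (hG : Supermartingale G ℱ μ) {σ : Ω → ℝ≥0}
    (hσ : IsStoppingTimeE ℱ fun ω ↦ σ ω) {K : ℝ≥0} (hK : ∀ ω, σ ω ≤ K) (m : ℕ) :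
    Integrable (fun ω ↦ G (dyadicCeil m (σ ω)) ω) μ ∧
      ∫ ω, G (dyadicCeil m (σ ω)) ω ∂μ ≤ ∫ ω, G 0 ω ∂μ := by
  have hsampled : Supermartingale (fun p ↦ G (dyadic m p))
      (sampledFiltration ℱ (dyadic_strictMono m).monotone) μ :=
    ⟨fun p ↦ hG.1 _, fun _ _ h ↦ hG.2.1 _ _ ((dyadic_strictMono m).monotone h), fun p ↦ hG.2.2 _⟩
  have hbdd (ω : Ω) : dyadicIndex m (σ ω) ≤ dyadicIndex m K :=
    dyadicIndex_le_iff.2 ((hK ω).trans (le_dyadicCeil m K))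
  rw [← dyadic_zero_right m]
  exact integrable_and_integral_stopped_le hsampled (hσ.isStoppingTime_dyadicIndex m) hbdd

lemma ae_exists_tendsto_of_nonneg_supermartingale (hG : Supermartingale G ℱ μ)
    (hpos : ∀ t ω, 0 ≤ G t ω) (hrc : ∀ ω, RightContinuous fun t ↦ G t ω) :
    ∀ᵐ ω ∂μ, ∃ x, Tendsto (fun t ↦ G t ω) atTop (𝓝 x) := by
  have hbdd (t : ℝ≥0) : eLpNorm ((-G) t) 1 μ ≤ (∫ ω, G 0 ω ∂μ).toNNReal := by
    have hle : ∫ ω, G t ω ∂μ ≤ ∫ ω, G 0 ω ∂μ := by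
      simpa only [setIntegral_univ] using hG.setIntegral_le zero_le MeasurableSet.univ
    calc eLpNorm ((-G) t) 1 μ = ∫⁻ ω, ENNReal.ofReal (G t ω) ∂μ := by
          rw [Pi.neg_apply, eLpNorm_neg, eLpNorm_one_eq_lintegral_enorm]
          exact lintegral_congr fun ω ↦ Real.enorm_of_nonneg (hpos t ω)
      _ = ENNReal.ofReal (∫ ω, G t ω ∂μ) :=
          (ofReal_integral_eq_lintegral_ofReal (hG.integrable t) (ae_of_all μ (hpos t))).symm
      _ ≤ ENNReal.ofReal (∫ ω, G 0 ω ∂μ) := ENNReal.ofReal_le_ofReal hle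
  filter_upwards [ae_exists_tendsto_of_submartingale hG.neg hbdd fun ω t ↦ (hrc ω t).neg]
    with ω ⟨x, hx⟩
  exact ⟨-x, by simpa only [Pi.neg_apply, neg_neg] using hx.neg⟩

theorem integrable_and_integral_evalAt_le_of_supermartingale (hG : Supermartingale G ℱ μ)
    (hpos : ∀ t ω, 0 ≤ G t ω) (hrc : ∀ ω, RightContinuous fun t ↦ G t ω)
    {τ : Ω → ℝ≥0∞} (hτ : IsStoppingTimeE ℱ τ) :
    Integrable (evalAt G τ) μ ∧ ∫ ω, evalAt G τ ω ∂μ ≤ ∫ ω, G 0 ω ∂μ := by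
  have hdyadic (m : ℕ) := integrable_and_integral_eval_dyadicCeil_le hG (hτ.truncTime m)
    (fun ω ↦ truncTime_le m (τ ω)) m
  refine integrable_and_integral_le_of_tendsto_ae (fun m ↦ (hdyadic m).1) (fun _ ω ↦ hpos _ ω)
    (fun m ↦ (hdyadic m).2) ?_
  filter_upwards [ae_exists_tendsto_of_nonneg_supermartingale hG hpos hrc] with ω ⟨x, hx⟩
  exact tendsto_eval_dyadicCeil_truncTime (hrc ω) hx τ

theorem stopping_set_subset_lemma_general {H : ℝ≥0 → Ω → ℝ} {h₀ g₀ : ℝ}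
    (hH : ∀ τ, IsStoppingTimeE ℱ τ → Integrable (evalAt H τ) μ)
    (hG : Supermartingale G ℱ μ) (hGpos : ∀ t ω, 0 ≤ G t ω)
    (hGrc : ∀ ω, RightContinuous fun t ↦ G t ω)
    (hH0 : ∫ ω, H 0 ω ∂μ = h₀) (hG0 : ∫ ω, G 0 ω ∂μ = g₀)
    (hopt : IsLUB {r : ℝ | ∃ τ : Ω → ℝ≥0∞, IsStoppingTimeE ℱ τ ∧
      r = ∫ ω, evalAt H τ ω ∂μ} h₀) :
    IsLUB {r : ℝ | ∃ τ : Ω → ℝ≥0∞, IsStoppingTimeE ℱ τ ∧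
      r = ∫ ω, (evalAt H τ ω + evalAt G τ ω) ∂μ} (h₀ + g₀) := by
  have hstopG {τ : Ω → ℝ≥0∞} (hτ : IsStoppingTimeE ℱ τ) :=
    integrable_and_integral_evalAt_le_of_supermartingale hG hGpos hGrc hτ
  have hadd {τ : Ω → ℝ≥0∞} (hτ : IsStoppingTimeE ℱ τ) :
      ∫ ω, (evalAt H τ ω + evalAt G τ ω) ∂μ = ∫ ω, evalAt H τ ω ∂μ + ∫ ω, evalAt G τ ω ∂μ :=
    integral_add (hH τ hτ) (hstopG hτ).1
  refine IsGreatest.isLUB ⟨⟨fun _ ↦ 0, isStoppingTimeE_zero ℱ, ?_⟩, ?_⟩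
  · rw [hadd (isStoppingTimeE_zero ℱ), evalAt_zero, evalAt_zero, hH0, hG0]
  · rintro r ⟨τ, hτ, rfl⟩
    rw [hadd hτ]
    exact add_le_add (hopt.1 ⟨τ, hτ, rfl⟩) ((hstopG hτ).2.trans_eq hG0)

end Supermartingale

/-- If `H` is a nonnegative right-continuous adapted process with
integrable supremum, `G` is a nonnegative right-continuous adapted supermartingale with
bounded expectations, `H(0) = h₀` and `G(0) = g₀` a.s. are constants, and
`sup_τ 𝔼(H(τ)) = h₀`, then `sup_τ 𝔼(H(τ) + G(τ)) = h₀ + g₀` (sup over all `𝔉`-stopping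
times with values in `[0,∞]`). -/
theorem stopping_set_subset_lemma
    (μ : Measure Ω) [IsProbabilityMeasure μ]
    (𝔉 : ℝ≥0 → MeasurableSpace Ω) (hle : ∀ t, 𝔉 t ≤ m0) (hmono : Monotone 𝔉)
    (hrc : RightContinuousFilt 𝔉)
    (hnull : ∀ A : Set Ω, μ A = 0 → MeasurableSet[𝔉 0] A)
    (H G : ℝ≥0 → Ω → ℝ)
    (hHpos : ∀ t ω, 0 ≤ H t ω) (hGpos : ∀ t ω, 0 ≤ G t ω)
    (hHrc : ∀ ω t, ContinuousWithinAt (fun s => H s ω) (Set.Ici t) t)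
    (hGrc : ∀ ω t, ContinuousWithinAt (fun s => G s ω) (Set.Ici t) t)
    (hHad : ∀ t, Measurable[𝔉 t] (H t)) (hGad : ∀ t, Measurable[𝔉 t] (G t))
    (hHint : ∫⁻ ω, ⨆ t : ℝ≥0, ENNReal.ofReal (H t ω) ∂μ < ∞)
    (hGint : ∀ t, Integrable (G t) μ)
    (hGsm : ∀ s t : ℝ≥0, s ≤ t → μ[G t | 𝔉 s] ≤ᵐ[μ] G s)
    (hGbdd : ∃ C : ℝ, ∀ t : ℝ≥0, ∫ ω, G t ω ∂μ ≤ C)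
    (h₀ g₀ : ℝ)
    (hH0 : ∀ᵐ ω ∂μ, H 0 ω = h₀) (hG0 : ∀ᵐ ω ∂μ, G 0 ω = g₀)
    (hopt : IsLUB {r : ℝ | ∃ τ : Ω → ℝ≥0∞, IsStoppingTimeE 𝔉 τ ∧
      r = ∫ ω, evalAt H τ ω ∂μ} h₀) :
    IsLUB {r : ℝ | ∃ τ : Ω → ℝ≥0∞, IsStoppingTimeE 𝔉 τ ∧
      r = ∫ ω, (evalAt H τ ω + evalAt G τ ω) ∂μ} (h₀ + g₀) := by
  exact stopping_set_subset_lemma_general (ℱ := ⟨𝔉, hmono, hle⟩)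
    (fun _ hτ ↦ integrable_evalAt_of_lintegral_iSup_lt_top (fun t ↦ (hHad t).mono (hle t) le_rfl)
      hHpos hHrc hHint (IsStoppingTimeE.measurable (ℱ := ⟨𝔉, hmono, hle⟩) hτ))
    ⟨fun t ↦ (hGad t).stronglyMeasurable, hGsm, hGint⟩ hGpos hGrc
    (by simp [integral_congr_ae hH0]) (by simp [integral_congr_ae hG0]) hopt

end
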